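/- arXiv:2405.12771 — 2 statements merged into one kernel-verified Lean document; each statement's English description precedes it below -/
import Mathlib

section
/- Let k be any field, let ψ(x, u₁,…,uₙ) be an existential ring formula, and let a₁,…,aₙ ∈ k. Then the rational function field k(t) satisfies ∀x ψ(x, a₁,…,aₙ) if and only if both of the following hold: (i) k(t) ⊨ ψ(t, a₁,…,aₙ), and (ii) k(t) ⊨ ψ(b, a₁,…,aₙ) for every b ∈ k. -/
open FirstOrder Language

attribute [local instance] FirstOrder.Ring.compatibleRingOfRing

/-! An element `x` of `k(t)` outside `k` is transcendental over `k`, so `t ↦ x` extends to a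
`k`-algebra embedding of `k(t)` into itself. Embeddings preserve existential formulas and this one
fixes the parameters, hence `ψ(t, a⃗)` implies `ψ(x, a⃗)`. -/

section Preservation

theorem isExistential_exs {L : Language} {α : Type*} :
    ∀ {n : ℕ} {φ : L.BoundedFormula α n}, φ.IsExistential → φ.exs.IsExistential
  | 0, _, hφ => hφ
  | _ + 1, φ, hφ => isExistential_exs (φ := φ.ex) hφ.ex

/-- An injective ring homomorphism as an embedding of structures in the language of rings, the form
in which preservation theorems apply to it. -/
def ringEmbedding {R S : Type*} [NonAssocRing R] [NonAssocRing S] [Ring.CompatibleRing R]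
    [Ring.CompatibleRing S] (f : R →+* S) (hf : Function.Injective f) : R ↪[Language.ring] S where
  toFun := f
  inj' := hf
  map_fun' g := by cases g <;> simp
  map_rel' r := by cases r

theorem realize_algHom_of_isExistential {k R S α β : Type*} [CommSemiring k] [Ring R] [Ring S]
    [Algebra k R] [Algebra k S] [Ring.CompatibleRing R] [Ring.CompatibleRing S]
    {φ : Language.ring.Formula (β ⊕ α)} (hφ : φ.IsExistential) {f : R →ₐ[k] S}
    (hf : Function.Injective f) {v : β → R} {a : α → k}
    (h : φ.Realize (Sum.elim v fun i => algebraMap k R (a i))) :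
    φ.Realize (Sum.elim (fun j => f (v j)) fun i => algebraMap k S (a i)) := by
  have valuation_eq : f ∘ Sum.elim v (fun i => algebraMap k R (a i)) =
      Sum.elim (fun j => f (v j)) fun i => algebraMap k S (a i) := by
    rw [Sum.comp_elim]
    exact congrArg _ (funext fun i => f.commutes (a i))
  rw [← valuation_eq, Formula.Realize, ← Subsingleton.elim (f ∘ default) default]
  exact hφ.realize_embedding (ringEmbedding f.toRingHom hf) h

end Preservation

section RationalFunctions

variable {k : Type*} [Field k]

theorem exists_algHom_ratFunc_X_eq {L : Type*} [Field L] [Algebra k L] {x : L}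
    (hx : Transcendental k x) : ∃ f : RatFunc k →ₐ[k] L, f RatFunc.X = x :=
  ⟨(IntermediateField.val _).comp (RatFunc.algEquivOfTranscendental x hx).toAlgHom,
    RatFunc.algEquivOfTranscendental_X x hx⟩

theorem forall_ratFunc_iff_of_algHom_stable {P : RatFunc k → Prop}
    (hP : ∀ (f : RatFunc k →ₐ[k] RatFunc k) (x : RatFunc k), P x → P (f x)) :
    (∀ x, P x) ↔ P RatFunc.X ∧ ∀ b : k, P (algebraMap k (RatFunc k) b) := by
  refine ⟨fun h => ⟨h _, fun b => h _⟩, fun ⟨hX, hk⟩ x => ?_⟩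
  by_cases hx : ∃ c, x = RatFunc.C c
  · obtain ⟨c, rfl⟩ := hx
    exact hk c
  · obtain ⟨f, rfl⟩ := exists_algHom_ratFunc_X_eq (RatFunc.transcendental_of_ne_C x hx)
    exact hP f _ hX

theorem stmt14_general {α : Type*} {φ : Language.ring.Formula (Unit ⊕ α)}
    (hφ : φ.IsExistential) (a : α → k) :
    (∀ x : RatFunc k, φ.Realize
        (Sum.elim (fun _ : Unit => x) (fun i => algebraMap k (RatFunc k) (a i)))) ↔
      (φ.Realize
          (Sum.elim (fun _ : Unit => (RatFunc.X : RatFunc k))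
            (fun i => algebraMap k (RatFunc k) (a i))) ∧
        ∀ b : k, φ.Realize
          (Sum.elim (fun _ : Unit => algebraMap k (RatFunc k) b)
            (fun i => algebraMap k (RatFunc k) (a i)))) :=
  forall_ratFunc_iff_of_algHom_stable fun f _ h =>
    realize_algHom_of_isExistential hφ f.injective h

end RationalFunctions

/-- let `k` be any field, `ψ(x, u₁, …, uₙ)` an existential ring formula
(given as `ψ₀.exs` with `ψ₀` quantifier-free) and `a₁, …, aₙ ∈ k`.  Then
`k(t) ⊨ ∀ x ψ(x, a⃗)` iff `k(t) ⊨ ψ(t, a⃗)` and `k(t) ⊨ ψ(b, a⃗)` for every `b ∈ k`. -/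
theorem stmt14 (k : Type*) [Field k]
    (n s : ℕ) (ψ : Language.ring.BoundedFormula (Unit ⊕ Fin n) s) (hψ : ψ.IsQF)
    (a : Fin n → k) :
    (∀ x : RatFunc k, (ψ.exs : Language.ring.Formula _).Realize
        (Sum.elim (fun _ : Unit => x) (fun i => algebraMap k (RatFunc k) (a i)))) ↔
      ((ψ.exs : Language.ring.Formula _).Realize
          (Sum.elim (fun _ : Unit => (RatFunc.X : RatFunc k))
            (fun i => algebraMap k (RatFunc k) (a i))) ∧
        ∀ b : k, (ψ.exs : Language.ring.Formula _).Realize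
          (Sum.elim (fun _ : Unit => algebraMap k (RatFunc k) b)
            (fun i => algebraMap k (RatFunc k) (a i)))) :=
  stmt14_general (isExistential_exs hψ.isExistential) a
end

section
/- Let Γ₂, Γ₃, Γ₄ be the tournaments (directed graphs, in the language with one binary relation E) on 2, 3, 4 vertices given respectively by: a single directed edge; a directed 3-cycle; and a directed 3-cycle together with a fourth vertex having edges to all three cycle vertices. Let N be the disjoint union of countably many copies of Γ₂ and countably many copies of Γ₄, and let M be the disjoint union of N and one copy of Γ₃. Then: (1) Th_{∀₂∃}(M) = Th_{∀₂∃}(N), i.e., the same sentences of the form ∀x₁∀x₂ ∃y₁…∃yₛ ψ (ψ quantifier-free) hold in M and in N; but (2) the sentence ∀x ( (∀y ¬xEy) ∨ (∀y ¬yEx) ∨ ∃z₁∃z₂∃z₃ ( ⋀_{i≠j} zᵢ ≠ z_j ∧ ⋀_i (xEzᵢ ∨ zᵢEx) ) ) is true in N and false in M. -/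
open FirstOrder Language

/-- Apply existential quantifiers to the last `s` bound variables of a bounded formula. -/
def FirstOrder.Language.BoundedFormula.exsN {L : FirstOrder.Language} {α : Type*} {m : ℕ} :
    ∀ {s : ℕ}, L.BoundedFormula α (m + s) → L.BoundedFormula α m
  | 0, φ => φ
  | _ + 1, φ => φ.ex.exsN

/-- The edge relation of the tournament `Γ₂`: a single directed edge `0 → 1`. -/
def E2 : Fin 2 → Fin 2 → Prop := fun a b => a = 0 ∧ b = 1

/-- The edge relation of the tournament `Γ₃`: a directed 3-cycle `0 → 1 → 2 → 0`. -/
def E3 : Fin 3 → Fin 3 → Prop := fun a b =>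
  (a = 0 ∧ b = 1) ∨ (a = 1 ∧ b = 2) ∨ (a = 2 ∧ b = 0)

/-- The edge relation of the tournament `Γ₄`: a directed 3-cycle `0 → 1 → 2 → 0` together with a
fourth vertex `3` having edges to all three cycle vertices. -/
def E4 : Fin 4 → Fin 4 → Prop := fun a b =>
  (a = 0 ∧ b = 1) ∨ (a = 1 ∧ b = 2) ∨ (a = 2 ∧ b = 0) ∨ (a = 3 ∧ (b = 0 ∨ b = 1 ∨ b = 2))

/-- The vertex set of `N = ω·Γ₂ ∪ ω·Γ₄`. -/
abbrev NVert : Type := (ℕ × Fin 2) ⊕ (ℕ × Fin 4)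

/-- The edge relation of `N = ω·Γ₂ ∪ ω·Γ₄` (disjoint unions, edges only within components). -/
def EN : NVert → NVert → Prop
  | Sum.inl (m, a), Sum.inl (m', b) => m = m' ∧ E2 a b
  | Sum.inr (m, a), Sum.inr (m', b) => m = m' ∧ E4 a b
  | _, _ => False

/-- The vertex set of `M = N ∪ Γ₃`. -/
abbrev MVert : Type := NVert ⊕ Fin 3

/-- The edge relation of `M = N ∪ Γ₃`. -/
def EM : MVert → MVert → Prop
  | Sum.inl x, Sum.inl y => EN x y
  | Sum.inr a, Sum.inr b => E3 a b
  | _, _ => False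

/-- A directed graph as a structure in Mathlib's language of graphs
(one binary relation symbol `E`). -/
def dirGraphStructure {V : Type*} (E : V → V → Prop) : Language.graph.Structure V where
  RelMap | .adj => fun x => E (x 0) (x 1)

instance : Language.graph.Structure NVert := dirGraphStructure EN

instance : Language.graph.Structure MVert := dirGraphStructure EM

/-! The vertices of a pair that lie in the extra component `Γ₃` of `M` lie on an edge of `Γ₃`, and
one of the infinitely many copies of `Γ₂` in `N` can be moved onto that edge. Hence every pair of
vertices of `M` lies in the image of an embedding of `N` into `M`. Conversely, a pair of vertices of
`N` misses some copy of `Γ₄`, which has room for `Γ₃`, so the pair lies in the image of an embedding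
of `M` into `N`. Embeddings preserve existential formulas, which gives (1). As for (2), the
condition on `x` depends only on the component of `x`, and among the three tournaments it fails
exactly on `Γ₃`, where every vertex has in-degree and out-degree one. -/

section Transfer

variable {L : FirstOrder.Language} {A B : Type*} [L.Structure A] [L.Structure B]

theorem isExistential_exsN {α : Type*} {m : ℕ} :
    ∀ {s : ℕ} {φ : L.BoundedFormula α (m + s)}, φ.IsExistential → φ.exsN.IsExistential
  | 0, _, hφ => hφ
  | s + 1, _, hφ => isExistential_exsN (s := s) hφ.ex

theorem realize_alls_of_forall_exists_embedding {n : ℕ}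
    (hcover : ∀ xs : Fin n → B, ∃ f : A ↪[L] B, ∀ i, xs i ∈ Set.range f)
    {φ : L.BoundedFormula Empty n} (hφ : φ.IsExistential) (hA : A ⊨ (φ.alls : L.Sentence)) :
    B ⊨ (φ.alls : L.Sentence) := by
  rw [Sentence.Realize, BoundedFormula.realize_alls] at hA ⊢
  intro xs
  obtain ⟨f, hf⟩ := hcover xs
  choose ys hys using hf
  have hB : φ.Realize (f ∘ default) (f ∘ ys) := hφ.realize_embedding f (hA ys)
  rwa [show f ∘ ys = xs from funext hys, Subsingleton.elim (f ∘ default) default] at hB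

end Transfer

section Digraphs

variable {V V' W W' : Type*} {R : V → V → Prop} {R' : V' → V' → Prop}
  {S : W → W → Prop} {S' : W' → W' → Prop}

/-- A relation embedding, as an embedding of first-order structures in the language of graphs. -/
def dirGraphEmbedding (f : R ↪r S) :
    letI := dirGraphStructure R
    letI := dirGraphStructure S
    V ↪[Language.graph] W :=
  letI := dirGraphStructure R
  letI := dirGraphStructure S
  { toFun := f
    inj' := f.injective
    map_fun' := nofun
    map_rel' := fun | .adj, _ => f.map_rel_iff }

/-- `S` is covered by copies of `R` up to `n` points at a time: every `n`-tuple of vertices of `S`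
lies in the image of some embedding of `R` into `S`. -/
def CoversTuples (n : ℕ) (R : V → V → Prop) (S : W → W → Prop) : Prop :=
  ∀ xs : Fin n → W, ∃ f : R ↪r S, ∀ i, xs i ∈ Set.range f

theorem CoversTuples.realize_alls {n : ℕ} (h : CoversTuples n R S)
    {φ : Language.graph.BoundedFormula Empty n} (hφ : φ.IsExistential) :
    letI := dirGraphStructure R
    letI := dirGraphStructure S
    V ⊨ (φ.alls : Language.graph.Sentence) → W ⊨ (φ.alls : Language.graph.Sentence) :=
  letI := dirGraphStructure R
  letI := dirGraphStructure S
  realize_alls_of_forall_exists_embedding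
    (fun xs => (h xs).imp' dirGraphEmbedding fun _ hf => hf) hφ

/-- Disjoint unions of isomorphic digraphs are isomorphic. -/
def sumLiftRelCongr (f : R ≃r R') (g : S ≃r S') : Sum.LiftRel R S ≃r Sum.LiftRel R' S' :=
  ⟨f.toEquiv.sumCongr g.toEquiv, by
    rintro (a | a) (b | b) <;> simp [f.map_rel_iff, g.map_rel_iff]⟩

/-- Commutativity of the disjoint union of digraphs. -/
def sumLiftRelComm (R : V → V → Prop) (S : W → W → Prop) : Sum.LiftRel R S ≃r Sum.LiftRel S R :=
  ⟨Equiv.sumComm V W, by rintro (a | a) (b | b) <;> simp⟩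

/-- Associativity of the disjoint union of digraphs. -/
def sumLiftRelAssoc (R : V → V → Prop) (R' : V' → V' → Prop) (S : W → W → Prop) :
    Sum.LiftRel (Sum.LiftRel R R') S ≃r Sum.LiftRel R (Sum.LiftRel R' S) :=
  ⟨Equiv.sumAssoc V V' W, by rintro ((a | a) | a) ((b | b) | b) <;> simp⟩

/-- The disjoint union of copies of the digraph `R` indexed by `ι`. -/
def Copies (ι : Type*) (R : V → V → Prop) : ι × V → ι × V → Prop :=
  fun p q => p.1 = q.1 ∧ R p.2 q.2

/-- `R` absorbs `S` if `R` is isomorphic to the disjoint union of `R` and `S`, by an isomorphism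
that can be chosen to keep the new copy of `S` away from any prescribed finite set of vertices. -/
def AbsorbsCopy (R : V → V → Prop) (S : W → W → Prop) : Prop :=
  ∀ s : Set V, s.Finite → ∃ e : Sum.LiftRel R S ≃r R, s ⊆ Set.range (e ∘ Sum.inl)

theorem exists_option_equiv_none_eq {ι : Type*} [Infinite ι] (k : ι) :
    ∃ e : Option ι ≃ ι, e none = k := by
  classical
  obtain ⟨e⟩ : Nonempty (Option ι ≃ ι) := Cardinal.eq.1 <| by
    rw [Cardinal.mk_option, Cardinal.add_one_eq (Cardinal.aleph0_le_mk ι)]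
  exact ⟨e.trans (Equiv.swap (e none) k), by simp⟩

theorem exists_sumLiftRel_copies_relIso {ι : Type*} [Infinite ι] (R : V → V → Prop) (k : ι) :
    ∃ e : Sum.LiftRel (Copies ι R) R ≃r Copies ι R, ∀ v, e (Sum.inr v) = (k, v) := by
  obtain ⟨e, he⟩ := exists_option_equiv_none_eq k
  let e' : (ι × V) ⊕ V ≃ ι × V :=
    ((Equiv.sumComm _ _).trans optionProdEquiv.symm).trans (e.prodCongr (Equiv.refl V))
  refine ⟨⟨e', ?_⟩, fun v => Prod.ext he rfl⟩
  rintro (⟨i, v⟩ | v) (⟨j, w⟩ | w) <;> simp [e', Copies]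

theorem absorbsCopy_copies (ι : Type*) [Infinite ι] (R : V → V → Prop) :
    AbsorbsCopy (Copies ι R) R := by
  intro s hs
  obtain ⟨k, hk⟩ := (hs.image Prod.fst).exists_notMem
  obtain ⟨e, he⟩ := exists_sumLiftRel_copies_relIso R k
  refine ⟨e, fun p hp => ?_⟩
  rcases hq : e.symm p with q | v
  · exact ⟨q, by simp [← hq]⟩
  · have hpv : p = (k, v) := by rw [← he, ← hq, e.apply_symm_apply]
    exact absurd ⟨p, hp, by rw [hpv]⟩ hk

theorem AbsorbsCopy.sumLiftRel_right (h : AbsorbsCopy R S) (R' : V' → V' → Prop) :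
    AbsorbsCopy (Sum.LiftRel R' R) S := by
  intro s hs
  obtain ⟨e, he⟩ := h (Sum.inr ⁻¹' s) (hs.preimage Sum.inr_injective.injOn)
  refine ⟨(sumLiftRelAssoc R' R S).trans (sumLiftRelCongr (RelIso.refl R') e), ?_⟩
  rintro (a | a) ha
  · exact ⟨Sum.inl a, rfl⟩
  · obtain ⟨b, hb⟩ := he ha
    exact ⟨Sum.inr b, congrArg Sum.inr hb⟩

theorem AbsorbsCopy.of_relIso (h : AbsorbsCopy R S) (i : R ≃r R') : AbsorbsCopy R' S := by
  intro s hs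
  obtain ⟨e, he⟩ := h (i ⁻¹' s) (hs.preimage i.injective.injOn)
  refine ⟨((sumLiftRelCongr i.symm (RelIso.refl S)).trans e).trans i, fun a ha => ?_⟩
  obtain ⟨b, hb⟩ := he (show i.symm a ∈ i ⁻¹' s by simpa using ha)
  refine ⟨i b, ?_⟩
  calc i (e (Sum.inl (i.symm (i b)))) = i (e (Sum.inl b)) := by rw [i.symm_apply_apply]
    _ = i (i.symm a) := congrArg i hb
    _ = a := i.apply_symm_apply a

theorem AbsorbsCopy.coversTuples (h : AbsorbsCopy R S') (i : S ↪r S') (n : ℕ) :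
    CoversTuples n (Sum.LiftRel R S) R := by
  intro xs
  obtain ⟨e, he⟩ := h (Set.range xs) (Set.finite_range xs)
  refine ⟨((RelEmbedding.refl R).sumLiftRelMap i).trans e.toRelEmbedding, fun j => ?_⟩
  obtain ⟨v, hv⟩ := he (Set.mem_range_self j)
  exact ⟨Sum.inl v, hv⟩

theorem AbsorbsCopy.coversTuples_sumLiftRel [Nonempty W'] {n : ℕ} (h : AbsorbsCopy R S)
    (hcover : CoversTuples n S S') : CoversTuples n R (Sum.LiftRel R S') := by
  intro xs
  obtain ⟨e, -⟩ := h ∅ Set.finite_empty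
  obtain ⟨w⟩ := ‹Nonempty W'›
  obtain ⟨f, hf⟩ := hcover fun j => Sum.elim (fun _ => w) id (xs j)
  let g : Sum.LiftRel R S ↪r Sum.LiftRel R S' := (RelEmbedding.refl R).sumLiftRelMap f
  have hg (j : Fin n) : xs j ∈ Set.range g := by
    have hj := hf j
    generalize xs j = x at hj ⊢
    rcases x with v | w'
    · exact ⟨Sum.inl v, rfl⟩
    · obtain ⟨u, hu⟩ := hj
      exact ⟨Sum.inr u, congrArg Sum.inr hu⟩
  refine ⟨e.symm.toRelEmbedding.trans g, fun j => ?_⟩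
  obtain ⟨y, hy⟩ := hg j
  exact ⟨e y, by simpa using hy⟩

/-- The vertex `x` of the digraph `R` has out-degree zero, in-degree zero, or at least three
neighbors: the condition on `x` in the sentence of part (2). -/
def IsSourceOrSinkOrHasThreeNeighbors (R : V → V → Prop) (x : V) : Prop :=
  (∀ y, ¬ R x y) ∨ (∀ y, ¬ R y x) ∨
    ∃ z₁ z₂ z₃ : V, z₁ ≠ z₂ ∧ z₁ ≠ z₃ ∧ z₂ ≠ z₃ ∧
      (R x z₁ ∨ R z₁ x) ∧ (R x z₂ ∨ R z₂ x) ∧ (R x z₃ ∨ R z₃ x)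

theorem isSourceOrSinkOrHasThreeNeighbors_apply_iff (f : R ↪r S) {x : V}
    (hf : ∀ y, S (f x) y ∨ S y (f x) → y ∈ Set.range f) :
    IsSourceOrSinkOrHasThreeNeighbors S (f x) ↔ IsSourceOrSinkOrHasThreeNeighbors R x := by
  refine or_congr ⟨fun h y hy => h (f y) (f.map_rel_iff.2 hy), fun h y hy => ?_⟩
    (or_congr ⟨fun h y hy => h (f y) (f.map_rel_iff.2 hy), fun h y hy => ?_⟩ ⟨?_, ?_⟩)
  · obtain ⟨v, rfl⟩ := hf y (.inl hy)
    exact h v (f.map_rel_iff.1 hy)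
  · obtain ⟨v, rfl⟩ := hf y (.inr hy)
    exact h v (f.map_rel_iff.1 hy)
  · rintro ⟨z₁, z₂, z₃, h⟩
    obtain ⟨y₁, rfl⟩ := hf z₁ h.2.2.2.1
    obtain ⟨y₂, rfl⟩ := hf z₂ h.2.2.2.2.1
    obtain ⟨y₃, rfl⟩ := hf z₃ h.2.2.2.2.2
    refine ⟨y₁, y₂, y₃, ?_⟩
    simpa only [f.map_rel_iff, ne_eq, f.inj] using h
  · rintro ⟨y₁, y₂, y₃, h⟩
    refine ⟨f y₁, f y₂, f y₃, ?_⟩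
    simpa only [f.map_rel_iff, ne_eq, f.inj] using h

theorem isSourceOrSinkOrHasThreeNeighbors_sumLiftRel_inl {x : V} :
    IsSourceOrSinkOrHasThreeNeighbors (Sum.LiftRel R S) (Sum.inl x) ↔
      IsSourceOrSinkOrHasThreeNeighbors R x :=
  isSourceOrSinkOrHasThreeNeighbors_apply_iff (RelEmbedding.sumLiftRelInl R S) <| by
    rintro (y | y) <;> simp

theorem isSourceOrSinkOrHasThreeNeighbors_sumLiftRel_inr {x : W} :
    IsSourceOrSinkOrHasThreeNeighbors (Sum.LiftRel R S) (Sum.inr x) ↔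
      IsSourceOrSinkOrHasThreeNeighbors S x :=
  isSourceOrSinkOrHasThreeNeighbors_apply_iff (RelEmbedding.sumLiftRelInr R S) <| by
    rintro (y | y) <;> simp

theorem isSourceOrSinkOrHasThreeNeighbors_copies {ι : Type*} {p : ι × V} :
    IsSourceOrSinkOrHasThreeNeighbors (Copies ι R) p ↔
      IsSourceOrSinkOrHasThreeNeighbors R p.2 := by
  let f : R ↪r Copies ι R := ⟨⟨Prod.mk p.1, Prod.mk_right_injective p.1⟩, by simp [Copies]⟩
  refine isSourceOrSinkOrHasThreeNeighbors_apply_iff f (x := p.2) fun q hq => ⟨q.2, ?_⟩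
  exact Prod.ext (hq.elim And.left fun h => h.1.symm) rfl

end Digraphs

section Tournaments

variable {W : Type*} {S : W → W → Prop}

instance : DecidableRel E2 := fun a b => inferInstanceAs (Decidable (a = 0 ∧ b = 1))

instance : DecidableRel E3 := fun a b =>
  inferInstanceAs (Decidable ((a = 0 ∧ b = 1) ∨ (a = 1 ∧ b = 2) ∨ (a = 2 ∧ b = 0)))

instance : DecidableRel E4 := fun a b => inferInstanceAs (Decidable
  ((a = 0 ∧ b = 1) ∨ (a = 1 ∧ b = 2) ∨ (a = 2 ∧ b = 0) ∨ (a = 3 ∧ (b = 0 ∨ b = 1 ∨ b = 2))))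

instance : Std.Asymm E3 := ⟨by decide⟩

instance : Std.Trichotomous E3 := ⟨by decide⟩

theorem exists_E2_relEmbedding [Std.Asymm S] {a b : W} (hab : S a b) :
    ∃ f : E2 ↪r S, f 0 = a ∧ f 1 = b := by
  have hne : a ≠ b := ne_of_irrefl hab
  refine ⟨⟨⟨![a, b], ?_⟩, ?_⟩, rfl, rfl⟩
  · simp [Function.Injective, Fin.forall_fin_two, hne, hne.symm]
  · simpa [Fin.forall_fin_two, E2, irrefl] using ⟨hab, asymm hab⟩

theorem coversTuples_E2 [Nontrivial W] [Std.Asymm S] [Std.Trichotomous S] :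
    CoversTuples 2 E2 S := by
  intro xs
  obtain ⟨b, hne, hb⟩ : ∃ b, b ≠ xs 0 ∧ (xs 1 = xs 0 ∨ xs 1 = b) := by
    by_cases h : xs 1 = xs 0
    · exact (exists_ne (xs 0)).imp fun _ hb => ⟨hb, .inl h⟩
    · exact ⟨xs 1, h, .inr rfl⟩
  obtain ⟨f, h₀, hfb⟩ : ∃ f : E2 ↪r S, xs 0 ∈ Set.range f ∧ b ∈ Set.range f := by
    rcases trichotomous_of S (xs 0) b with h | h | h
    · obtain ⟨f, h₀, h₁⟩ := exists_E2_relEmbedding h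
      exact ⟨f, ⟨0, h₀⟩, ⟨1, h₁⟩⟩
    · exact absurd h.symm hne
    · obtain ⟨f, h₀, h₁⟩ := exists_E2_relEmbedding h
      exact ⟨f, ⟨1, h₁⟩, ⟨0, h₀⟩⟩
  refine ⟨f, Fin.forall_fin_two.2 ⟨h₀, ?_⟩⟩
  rcases hb with h | h <;> rwa [h]

/-- `Γ₃` as the 3-cycle inside `Γ₄`. -/
def e3RelEmbeddingE4 : E3 ↪r E4 := ⟨Fin.castSuccEmb, by decide⟩

theorem isSourceOrSinkOrHasThreeNeighbors_E2 (x : Fin 2) :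
    IsSourceOrSinkOrHasThreeNeighbors E2 x := by
  revert x; unfold IsSourceOrSinkOrHasThreeNeighbors; decide

theorem not_isSourceOrSinkOrHasThreeNeighbors_E3 (x : Fin 3) :
    ¬ IsSourceOrSinkOrHasThreeNeighbors E3 x := by
  revert x; unfold IsSourceOrSinkOrHasThreeNeighbors; decide

theorem isSourceOrSinkOrHasThreeNeighbors_E4 (x : Fin 4) :
    IsSourceOrSinkOrHasThreeNeighbors E4 x := by
  revert x; unfold IsSourceOrSinkOrHasThreeNeighbors; decide

end Tournaments

theorem EN_eq_sumLiftRel : EN = Sum.LiftRel (Copies ℕ E2) (Copies ℕ E4) := by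
  ext (x | x) (y | y) <;> simp [EN, Copies]

theorem EM_eq_sumLiftRel : EM = Sum.LiftRel EN E3 := by
  ext (x | x) (y | y) <;> simp [EM]

theorem absorbsCopy_EN_E2 : AbsorbsCopy EN E2 := by
  rw [EN_eq_sumLiftRel]
  exact ((absorbsCopy_copies ℕ E2).sumLiftRel_right (Copies ℕ E4)).of_relIso
    (sumLiftRelComm (Copies ℕ E4) (Copies ℕ E2))

theorem absorbsCopy_EN_E4 : AbsorbsCopy EN E4 := by
  rw [EN_eq_sumLiftRel]
  exact (absorbsCopy_copies ℕ E4).sumLiftRel_right (Copies ℕ E2)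

theorem coversTuples_EM_EN (n : ℕ) : CoversTuples n EM EN := by
  rw [EM_eq_sumLiftRel]
  exact absorbsCopy_EN_E4.coversTuples e3RelEmbeddingE4 n

theorem coversTuples_EN_EM : CoversTuples 2 EN EM := by
  rw [EM_eq_sumLiftRel]
  exact absorbsCopy_EN_E2.coversTuples_sumLiftRel coversTuples_E2

theorem isSourceOrSinkOrHasThreeNeighbors_EN (x : NVert) :
    IsSourceOrSinkOrHasThreeNeighbors EN x := by
  rw [EN_eq_sumLiftRel]
  rcases x with p | p
  · exact isSourceOrSinkOrHasThreeNeighbors_sumLiftRel_inl.2 <|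
      isSourceOrSinkOrHasThreeNeighbors_copies.2 <| isSourceOrSinkOrHasThreeNeighbors_E2 p.2
  · exact isSourceOrSinkOrHasThreeNeighbors_sumLiftRel_inr.2 <|
      isSourceOrSinkOrHasThreeNeighbors_copies.2 <| isSourceOrSinkOrHasThreeNeighbors_E4 p.2

theorem not_isSourceOrSinkOrHasThreeNeighbors_EM_inr (x : Fin 3) :
    ¬ IsSourceOrSinkOrHasThreeNeighbors EM (Sum.inr x) := by
  rw [EM_eq_sumLiftRel, isSourceOrSinkOrHasThreeNeighbors_sumLiftRel_inr]
  exact not_isSourceOrSinkOrHasThreeNeighbors_E3 x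

/-- (1) `M` and `N` satisfy the same `∀₂∃`-sentences in the language of graphs;
(2) the sentence
`∀x ((∀y ¬xEy) ∨ (∀y ¬yEx) ∨ ∃z₁z₂z₃ (⋀_{i≠j} zᵢ ≠ z_j ∧ ⋀_i (xEzᵢ ∨ zᵢEx)))`
is true in `N` and false in `M`. -/
theorem stmt19 :
    (∀ (s : ℕ) (ψ : Language.graph.BoundedFormula Empty (2 + s)), ψ.IsQF →
      (MVert ⊨ (ψ.exsN.alls : Language.graph.Sentence) ↔
        NVert ⊨ (ψ.exsN.alls : Language.graph.Sentence))) ∧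
    ((∀ x : NVert, (∀ y, ¬ EN x y) ∨ (∀ y, ¬ EN y x) ∨
        ∃ z₁ z₂ z₃ : NVert, z₁ ≠ z₂ ∧ z₁ ≠ z₃ ∧ z₂ ≠ z₃ ∧
          (EN x z₁ ∨ EN z₁ x) ∧ (EN x z₂ ∨ EN z₂ x) ∧ (EN x z₃ ∨ EN z₃ x)) ∧
      ¬ (∀ x : MVert, (∀ y, ¬ EM x y) ∨ (∀ y, ¬ EM y x) ∨
        ∃ z₁ z₂ z₃ : MVert, z₁ ≠ z₂ ∧ z₁ ≠ z₃ ∧ z₂ ≠ z₃ ∧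
          (EM x z₁ ∨ EM z₁ x) ∧ (EM x z₂ ∨ EM z₂ x) ∧ (EM x z₃ ∨ EM z₃ x))) := by
  refine ⟨fun s ψ hψ => ?_, isSourceOrSinkOrHasThreeNeighbors_EN, fun h => ?_⟩
  · have hφ : ψ.exsN.IsExistential := isExistential_exsN hψ.isExistential
    exact ⟨(coversTuples_EM_EN 2).realize_alls hφ, coversTuples_EN_EM.realize_alls hφ⟩
  · exact not_isSourceOrSinkOrHasThreeNeighbors_EM_inr 0 (h (Sum.inr 0))
end
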